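/- arXiv:2502.11579 — 3 statements merged into one kernel-verified Lean document; each statement's English description precedes it below -/
import Mathlib

section
/- Let κ be a regular uncountable cardinal and λ, μ cardinals with κ ≤ λ and κ ≤ μ. Let d̄ = ⟨d_x : x ∈ P_κμ⟩ be a thin P_κμ-list with witnessing club C ⊆ P_κμ (so |Lev_y(d̄)| < κ for all y ∈ C), and for each x ∈ P_κμ fix c_x ∈ C with x ⊆ c_x. Let ⟨A_α : α < μ⟩ be a family of subsets of P_κλ such that (⋂_{α∈u} A_α) ∖ (⋃_{α∈v} A_α) is unbounded in P_κλ for all disjoint u, v ∈ P_κμ (the intersection over ∅ being all of P_κλ). For x ∈ P_κμ set B_x = ⋃_{d ∈ Lev_{c_x}(d̄)} ((⋂_{α∈d∩x} A_α) ∖ (⋃_{α∈x∖d} A_α)). Then for every X ⊆ P_κμ with |X| < κ, the set ⋂_{x∈X} B_x is unbounded in P_κλ. Consequently, the family {B_x : x ∈ P_κμ} ∪ {{z ∈ P_κλ : ξ ∈ z} : ξ < λ} generates a proper κ-complete fine filter on P_κλ. -/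
/-!
Given fewer than `κ` indices `x ∈ X`, regularity makes `y = ⋃_{x ∈ X} c x` an element of
`P_κ M`, and the single set `d y` induces a branch through all the relevant levels at once:
`d y ∩ c x ∈ Lev_{c x}(d)` for every `x ∈ X`. A point `z` that lies in `A α` for
`α ∈ ⋃ X ∩ d y` and outside `A α` for `α ∈ ⋃ X \ d y` therefore lies in every `B_x`, and the
independence hypothesis on `A` provides such `z` above any given `w` (`exists_mem_Bsets`).

Properness of the generated filter follows by taking `w` to be the set of the fewer than `κ`
points `ξ` occurring in the fine sets among the chosen generators. The filter is `κ`-complete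
because, by regularity, the union of fewer than `κ` generating subfamilies, each of size less
than `κ`, again has size less than `κ` (`sInter_mem_GenFilter`).
-/

/-- `P_κ L`: the collection of subsets of `L` of cardinality less than `κ`. -/
def Pk (κ : Cardinal) (L : Type) : Set (Set L) := {z : Set L | Cardinal.mk ↥z < κ}

/-- The level of a `P_κ M`-list `d` at `y`: `{d x ∩ y : y ⊆ x ∈ P_κ M}`. -/
def Lev (κ : Cardinal) {M : Type} (d : Set M → Set M) (y : Set M) : Set (Set M) :=
  {e : Set M | ∃ x : Set M, Cardinal.mk ↥x < κ ∧ y ⊆ x ∧ e = d x ∩ y}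

/-- `Cl` is a club in `P_κ M`: a cofinal subset closed under unions of ⊆-increasing
chains of length `< κ`. -/
def IsClubPk (κ : Cardinal) {M : Type} (Cl : Set (Set M)) : Prop :=
  Cl ⊆ Pk κ M ∧ (∀ w : Set M, Cardinal.mk ↥w < κ → ∃ z ∈ Cl, w ⊆ z) ∧
  ∀ D : Set (Set M), D ⊆ Cl → D.Nonempty → IsChain (· ⊆ ·) D →
    Cardinal.mk ↥D < κ → ⋃₀ D ∈ Cl

/-- The set `B_x = ⋃_{e ∈ Lev_{c x}(d)} ((⋂_{α ∈ e ∩ x} A α) ∖ (⋃_{α ∈ x ∖ e} A α))`,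
the empty intersection being all of `P_κ L`. -/
def Bset (κ : Cardinal) {L M : Type} (d c : Set M → Set M) (A : M → Set (Set L))
    (x : Set M) : Set (Set L) :=
  ⋃ e ∈ Lev κ d (c x), ((Pk κ L ∩ ⋂ α ∈ e ∩ x, A α) \ ⋃ α ∈ x \ e, A α)

/-- The filter on `P_κ L` generated by the family `G`: supersets (within `P_κ L`) of
intersections of fewer than `κ` members of `G`. -/
def GenFilter (κ : Cardinal) (L : Type) (G : Set (Set (Set L))) : Set (Set (Set L)) :=
  {Y : Set (Set L) | Y ⊆ Pk κ L ∧
    ∃ S : Set (Set (Set L)), S ⊆ G ∧ Cardinal.mk ↥S < κ ∧ Pk κ L ∩ ⋂₀ S ⊆ Y}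

/-- Fewer than `κ` values of `f` on the indices satisfying `p` are already attained at fewer
than `κ` such indices; one index is kept for each value, as `f` need not be injective. -/
lemma exists_small_indices {κ : Cardinal} {ι α : Type} (p : ι → Prop) (f : ι → α)
    (S : Set α) (hS : Cardinal.mk ↥S < κ) :
    ∃ R : Set ι, Cardinal.mk ↥R < κ ∧ (∀ i ∈ R, p i) ∧
      ∀ i, p i → f i ∈ S → ∃ j ∈ R, f j = f i := by
  have hsurj : Set.SurjOn f {i | p i} (S ∩ f '' {i | p i}) := fun _ h => h.2
  obtain ⟨R, hRp, hR⟩ := hsurj.exists_bijOn_subset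
  refine ⟨R, ?_, fun i hi => hRp hi, fun i hi hiS => ?_⟩
  · rw [← Cardinal.mk_image_eq_of_injOn f R hR.injOn, hR.image_eq]
    exact (Cardinal.mk_le_mk_of_subset Set.inter_subset_left).trans_lt hS
  · obtain ⟨j, hj, hji⟩ := hR.surjOn ⟨hiS, i, hi, rfl⟩
    exact ⟨j, hj, hji⟩

/-- Any fewer than `κ` of the sets `B_x` have unbounded intersection. -/
lemma exists_mem_Bsets {κ : Cardinal} (hκ : κ.IsRegular) {L M : Type}
    {d c : Set M → Set M} {A : M → Set (Set L)}
    (hcκ : ∀ x ∈ Pk κ M, c x ∈ Pk κ M) (hc : ∀ x ∈ Pk κ M, x ⊆ c x)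
    (hA : ∀ u v : Set M, Cardinal.mk ↥u < κ → Cardinal.mk ↥v < κ → u ∩ v = ∅ →
      ∀ w : Set L, Cardinal.mk ↥w < κ →
        ∃ z : Set L, Cardinal.mk ↥z < κ ∧ w ⊆ z ∧
          (∀ α ∈ u, z ∈ A α) ∧ ∀ α ∈ v, z ∉ A α)
    {X : Set (Set M)} (hX : X ⊆ Pk κ M) (hXκ : Cardinal.mk ↥X < κ)
    {w : Set L} (hw : Cardinal.mk ↥w < κ) :
    ∃ z : Set L, Cardinal.mk ↥z < κ ∧ w ⊆ z ∧ ∀ x ∈ X, z ∈ Bset κ d c A x := by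
  have hy : Cardinal.mk ↥(⋃ x ∈ X, c x) < κ :=
    (Cardinal.card_biUnion_lt_iff_forall_of_isRegular hκ hXκ).2 fun x hx => hcκ x (hX hx)
  have hU : Cardinal.mk ↥(⋃ x ∈ X, x) < κ :=
    (Cardinal.card_biUnion_lt_iff_forall_of_isRegular hκ hXκ).2 fun x hx => hX hx
  set y := ⋃ x ∈ X, c x
  set U := ⋃ x ∈ X, x
  obtain ⟨z, hz, hwz, hin, hout⟩ := hA (U ∩ d y) (U \ d y)
    ((Cardinal.mk_le_mk_of_subset Set.inter_subset_left).trans_lt hU)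
    ((Cardinal.mk_le_mk_of_subset Set.sdiff_subset).trans_lt hU)
    (by ext; simp; tauto) w hw
  refine ⟨z, hz, hwz, fun x hx => ?_⟩
  have hxU : x ⊆ U := Set.subset_biUnion_of_mem (u := fun x => x) hx
  refine Set.mem_biUnion
    (show d y ∩ c x ∈ Lev κ d (c x) from ⟨y, hy, Set.subset_biUnion_of_mem hx, rfl⟩)
    ⟨⟨hz, Set.mem_iInter₂.2 fun α hα => hin α ⟨hxU hα.2, hα.1.1⟩⟩, ?_⟩
  rw [Set.mem_iUnion₂]
  rintro ⟨α, ⟨hαx, hα⟩, hzα⟩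
  exact hout α ⟨hxU hαx, fun h => hα ⟨h, hc x (hX hx) hαx⟩⟩ hzα

lemma mem_GenFilter_of_mem {κ : Cardinal} (hκ : κ.IsRegular) {L : Type}
    {G : Set (Set (Set L))} {Y : Set (Set L)} (hY : Y ∈ G) (hYκ : Y ⊆ Pk κ L) :
    Y ∈ GenFilter κ L G := by
  refine ⟨hYκ, {Y}, by simpa using hY, ?_, by simp⟩
  simpa using hκ.nat_lt 1

lemma sInter_mem_GenFilter {κ : Cardinal} (hκ : κ.IsRegular) {L : Type}
    {G : Set (Set (Set L))} {T : Set (Set (Set L))} (hT : T ⊆ GenFilter κ L G)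
    (hne : T.Nonempty) (hTκ : Cardinal.mk ↥T < κ) : ⋂₀ T ∈ GenFilter κ L G := by
  obtain ⟨Y₀, hY₀⟩ := hne
  choose S hSG hSκ hS using fun Y (hY : Y ∈ T) => (hT hY).2
  refine ⟨(Set.sInter_subset_of_mem hY₀).trans (hT hY₀).1, ⋃ Y, ⋃ hY : Y ∈ T, S Y hY,
    Set.iUnion₂_subset hSG, (Cardinal.card_biUnion_lt_iff_forall_of_isRegular hκ hTκ).2 hSκ, ?_⟩
  rintro z ⟨hz, hzS⟩ Y hY
  exact hS Y hY ⟨hz, fun s hs => hzS s (Set.mem_iUnion₂.2 ⟨Y, hY, hs⟩)⟩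

lemma Bset_subset_Pk {κ : Cardinal} {L M : Type} (d c : Set M → Set M)
    (A : M → Set (Set L)) (x : Set M) : Bset κ d c A x ⊆ Pk κ L :=
  Set.iUnion₂_subset fun _ _ _ h => h.1.1

/-- Lemma 3.4: the sets `B_x` (for `x ∈ P_κ M`) have the property that any `< κ` of
them have unbounded intersection in `P_κ L`; consequently, together with the fine sets
`{z ∈ P_κ L : ξ ∈ z}`, they generate a proper `κ`-complete fine filter on `P_κ L`. -/
theorem Bsets_generate_filter (κ lam mu : Cardinal)
    (hκ : κ.IsRegular) (hunc : Cardinal.aleph0 < κ) (hkl : κ ≤ lam) (hkm : κ ≤ mu)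
    (L M : Type) (hL : Cardinal.mk L = lam) (hM : Cardinal.mk M = mu)
    (d : Set M → Set M) (hd : ∀ x : Set M, Cardinal.mk ↥x < κ → d x ⊆ x)
    (Cl : Set (Set M)) (hCl : IsClubPk κ Cl)
    (hthin : ∀ y ∈ Cl, Cardinal.mk ↥(Lev κ d y) < κ)
    (c : Set M → Set M) (hc : ∀ x : Set M, Cardinal.mk ↥x < κ → c x ∈ Cl ∧ x ⊆ c x)
    (A : M → Set (Set L)) (hA : ∀ α : M, A α ⊆ Pk κ L)
    (hAunb : ∀ u v : Set M, Cardinal.mk ↥u < κ → Cardinal.mk ↥v < κ → u ∩ v = ∅ →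
      ∀ w : Set L, Cardinal.mk ↥w < κ →
        ∃ z : Set L, Cardinal.mk ↥z < κ ∧ w ⊆ z ∧
          (∀ α ∈ u, z ∈ A α) ∧ ∀ α ∈ v, z ∉ A α) :
    (∀ X : Set (Set M), X ⊆ Pk κ M → Cardinal.mk ↥X < κ →
      ∀ w : Set L, Cardinal.mk ↥w < κ →
        ∃ z : Set L, Cardinal.mk ↥z < κ ∧ w ⊆ z ∧ ∀ x ∈ X, z ∈ Bset κ d c A x) ∧
    ∀ F : Set (Set (Set L)),
      F = GenFilter κ L ({Y : Set (Set L) | ∃ x : Set M, Cardinal.mk ↥x < κ ∧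
            Y = Bset κ d c A x} ∪
          {Y : Set (Set L) | ∃ ξ : L, Y = {z ∈ Pk κ L | ξ ∈ z}}) →
      ∅ ∉ F ∧ Pk κ L ∈ F ∧
        (∀ Y ∈ F, ∀ Y' : Set (Set L), Y ⊆ Y' → Y' ⊆ Pk κ L → Y' ∈ F) ∧
        (∀ Y₁ ∈ F, ∀ Y₂ ∈ F, Y₁ ∩ Y₂ ∈ F) ∧
        (∀ T : Set (Set (Set L)), T ⊆ F → T.Nonempty → Cardinal.mk ↥T < κ → ⋂₀ T ∈ F) ∧
        (∀ ξ : L, {z ∈ Pk κ L | ξ ∈ z} ∈ F) ∧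
        ∀ x : Set M, Cardinal.mk ↥x < κ → Bset κ d c A x ∈ F := by
  have hunb : ∀ X : Set (Set M), X ⊆ Pk κ M → Cardinal.mk ↥X < κ →
      ∀ w : Set L, Cardinal.mk ↥w < κ →
        ∃ z : Set L, Cardinal.mk ↥z < κ ∧ w ⊆ z ∧ ∀ x ∈ X, z ∈ Bset κ d c A x :=
    fun X hX hXκ w hw => exists_mem_Bsets hκ (fun x hx => hCl.1 (hc x hx).1)
      (fun x hx => (hc x hx).2) hAunb hX hXκ hw
  refine ⟨hunb, ?_⟩
  rintro F rfl
  refine ⟨?_, ⟨subset_rfl, ∅, Set.empty_subset _, by simpa using hκ.pos, by simp⟩,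
    fun Y hY Y' hYY' hY' => ⟨hY', ?_⟩, fun Y₁ h₁ Y₂ h₂ => ?_,
    fun T hT hne hTκ => sInter_mem_GenFilter hκ hT hne hTκ,
    fun ξ => mem_GenFilter_of_mem hκ (Or.inr ⟨ξ, rfl⟩) fun z hz => hz.1,
    fun x hx => mem_GenFilter_of_mem hκ (Or.inl ⟨x, hx, rfl⟩) (Bset_subset_Pk d c A x)⟩
  · rintro ⟨-, S, hSG, hSκ, hS⟩
    obtain ⟨X, hXκ, hX, hXS⟩ := exists_small_indices (fun x : Set M => Cardinal.mk ↥x < κ)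
      (Bset κ d c A) S hSκ
    obtain ⟨w, hwκ, -, hwS⟩ := exists_small_indices (fun _ : L => True)
      (fun ξ => {z ∈ Pk κ L | ξ ∈ z}) S hSκ
    obtain ⟨z, hz, hwz, hzX⟩ := hunb X hX hXκ w hwκ
    refine hS ⟨hz, fun Y hY => ?_⟩
    rcases hSG hY with ⟨x, hx, rfl⟩ | ⟨ξ, rfl⟩
    · obtain ⟨x', hx', he⟩ := hXS x hx hY
      exact he ▸ hzX x' hx'
    · obtain ⟨ξ', hξ', he⟩ := hwS ξ trivial hY
      exact he ▸ (⟨hz, hwz hξ'⟩ : z ∈ {z ∈ Pk κ L | ξ' ∈ z})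
  · obtain ⟨-, S, hSG, hSκ, hS⟩ := hY
    exact ⟨S, hSG, hSκ, hS.trans hYY'⟩
  · rw [← Set.sInter_pair]
    refine sInter_mem_GenFilter hκ (Set.pair_subset h₁ h₂) (Set.insert_nonempty _ _) ?_
    exact (Cardinal.lt_aleph0_of_finite _).trans hunc
end

section
/- Let κ be a regular uncountable cardinal and λ, μ cardinals with κ ≤ λ and κ ≤ μ. Let d̄ = ⟨d_x : x ∈ P_κμ⟩ be a thin P_κμ-list with witnessing club C ⊆ P_κμ, for each x ∈ P_κμ fix c_x ∈ C with x ⊆ c_x, let ⟨A_α : α < μ⟩ be any family of subsets of P_κλ, and set B_x = ⋃_{d ∈ Lev_{c_x}(d̄)} ((⋂_{α∈d∩x} A_α) ∖ (⋃_{α∈x∖d} A_α)) (intersection over ∅ being all of P_κλ). If U is a κ-complete ultrafilter on P_κλ with B_x ∈ U for every x ∈ P_κμ, then d := {α < μ : A_α ∈ U} is a branch of d̄; that is, d ∩ x ∈ Lev_x(d̄) for every x ∈ P_κμ. -/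
/-- Levels restrict: the trace on `x` of an element of the level at `y ⊇ x` is in the level
at `x`. -/
lemma inter_mem_Lev {κ : Cardinal} {M : Type} {d : Set M → Set M} {x y e : Set M}
    (hxy : x ⊆ y) (he : e ∈ Lev κ d y) : e ∩ x ∈ Lev κ d x := by
  obtain ⟨w, hw, hyw, rfl⟩ := he
  exact ⟨w, hw, hxy.trans hyw, by rw [Set.inter_assoc, Set.inter_eq_right.2 hxy]⟩

/-- Lemma 3.5: if `U` is a `κ`-complete ultrafilter on `P_κ L` containing every `B_x`,
then `d_br = {α : A α ∈ U}` is a branch of the thin list `d`, i.e. `d_br ∩ x ∈ Lev_x(d)`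
for every `x ∈ P_κ M`. -/
theorem branch_from_ultrafilter (κ lam mu : Cardinal)
    (hκ : κ.IsRegular) (hunc : Cardinal.aleph0 < κ) (hkl : κ ≤ lam) (hkm : κ ≤ mu)
    (L M : Type) (hL : Cardinal.mk L = lam) (hM : Cardinal.mk M = mu)
    (d : Set M → Set M) (hd : ∀ x : Set M, Cardinal.mk ↥x < κ → d x ⊆ x)
    (Cl : Set (Set M)) (hCl : IsClubPk κ Cl)
    (hthin : ∀ y ∈ Cl, Cardinal.mk ↥(Lev κ d y) < κ)
    (c : Set M → Set M) (hc : ∀ x : Set M, Cardinal.mk ↥x < κ → c x ∈ Cl ∧ x ⊆ c x)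
    (A : M → Set (Set L)) (hA : ∀ α : M, A α ⊆ Pk κ L)
    (U : Set (Set (Set L)))
    (hU1 : ∀ Y ∈ U, Y ⊆ Pk κ L) (hU2 : Pk κ L ∈ U) (hU3 : ∅ ∉ U)
    (hU4 : ∀ Y ∈ U, ∀ Y' : Set (Set L), Y ⊆ Y' → Y' ⊆ Pk κ L → Y' ∈ U)
    (hU5 : ∀ T : Set (Set (Set L)), T ⊆ U → T.Nonempty → Cardinal.mk ↥T < κ → ⋂₀ T ∈ U)
    (hU6 : ∀ Y : Set (Set L), Y ⊆ Pk κ L → Y ∈ U ∨ Pk κ L \ Y ∈ U)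
    (hBU : ∀ x : Set M, Cardinal.mk ↥x < κ → Bset κ d c A x ∈ U) :
    ∀ x : Set M, Cardinal.mk ↥x < κ → {α : M | A α ∈ U} ∩ x ∈ Lev κ d x := by
  classical
  intro x hx
  let S : M → Set (Set L) := fun α => if A α ∈ U then A α else Pk κ L \ A α
  have hS : ∀ α, S α ∈ U := by
    intro α
    by_cases h : A α ∈ U
    · simpa only [S, if_pos h] using h
    · simpa only [S, if_neg h] using (hU6 (A α) (hA α)).resolve_left h
  have hT : ⋂₀ insert (Bset κ d c A x) (S '' x) ∈ U := by
    refine hU5 _ ?_ (Set.insert_nonempty _ _) ?_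
    · rintro Y (rfl | ⟨α, -, rfl⟩)
      · exact hBU x hx
      · exact hS α
    · exact Cardinal.mk_insert_le.trans_lt (Cardinal.add_lt_of_lt hunc.le
        (Cardinal.mk_image_le.trans_lt hx) (Cardinal.one_lt_aleph0.trans hunc))
  obtain ⟨z, hz⟩ : (⋂₀ insert (Bset κ d c A x) (S '' x)).Nonempty := by
    rw [Set.nonempty_iff_ne_empty]
    intro h
    exact hU3 (h ▸ hT)
  have hzA : ∀ α ∈ x, (z ∈ A α ↔ A α ∈ U) := by
    intro α hα
    have h1 : z ∈ S α := hz _ (Or.inr ⟨α, hα, rfl⟩)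
    by_cases h : A α ∈ U
    · simp only [S, if_pos h] at h1
      exact iff_of_true h1 h
    · simp only [S, if_neg h] at h1
      exact iff_of_false h1.2 h
  have hzB : z ∈ Bset κ d c A x := hz _ (Or.inl rfl)
  obtain ⟨e, he, ⟨-, hz1⟩, hz2⟩ := Set.mem_iUnion₂.1 hzB
  have key : {α : M | A α ∈ U} ∩ x = e ∩ x := by
    ext α
    refine and_congr_left fun hα => ⟨fun h => ?_, fun h => ?_⟩
    · by_contra hne
      exact hz2 (Set.mem_iUnion₂.2 ⟨α, ⟨hα, hne⟩, (hzA α hα).2 h⟩)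
    · exact (hzA α hα).1 (Set.mem_iInter₂.1 hz1 α ⟨h, hα⟩)
  rw [key]
  exact inter_mem_Lev (hc x hx).2 he
end

section
/- Let F be a proper ℵ2-complete filter on a set Z (closed under intersections of at most ℵ1 many of its members), and suppose there exists D ⊆ F^+ that is dense in (F^+, ⊆) (every A ∈ F^+ has a subset belonging to D) and countably closed (every ⊆-decreasing sequence ⟨A_n : n < ω⟩ of members of D has a lower bound in D). Then for every A ∈ F^+, Player II has a winning strategy in the Galvin game ⅁_Gal(F,A): there is a function σ from finite sequences of functions A → ω1 to ordinals below ω1 such that for every sequence ⟨F_i : i < ω⟩ of functions F_i : A → ω1, setting ξ_i = σ(⟨F_0, …, F_i⟩), one has ⋂_{i<ω} {a ∈ A : F_i(a) < sup_{j<ω} ξ_j} ∈ F^+. -/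
/-!
Player II keeps a decreasing sequence of sets `B₀ ⊇ B₁ ⊇ ⋯` in `D`, starting below `A`. When
Player I plays `f`, the current set `B` is the union of the `ℵ₁` fibres `{a ∈ B | f a = ξ}`, so
`ℵ₂`-completeness makes one of them positive (`exists_positive_fibre`); Player II replies with the
successor of that `ξ` and shrinks `B` to a member of `D` inside the fibre. A lower bound in `D` of
the resulting sequence is positive and contained in the set Player II has to keep positive.
The current set depends only on the moves made so far, so the strategy is a left fold over the
list of moves.
-/

/-- A positive set on which `f` takes values below `ω₁` has a positive fibre of `f`, for a filter
closed under intersections of at most `ℵ₁` members. -/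
theorem exists_positive_fibre.{u} {Z : Type} {F : Set (Set Z)}
    (hcomplete : ∀ T : Set (Set Z), T ⊆ F → T.Nonempty →
      Cardinal.mk ↥T ≤ Cardinal.aleph 1 → ⋂₀ T ∈ F)
    {B : Set Z} (hB : ∀ Y ∈ F, (B ∩ Y).Nonempty)
    (f : Z → Ordinal.{u}) (hf : ∀ a ∈ B, f a < (Cardinal.aleph 1).ord) :
    ∃ ξ < (Cardinal.aleph 1).ord, ∀ Y ∈ F, ({a ∈ B | f a = ξ} ∩ Y).Nonempty := by
  by_contra! hcon
  choose! Y hYF hY using hcon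
  let T : Set (Set Z) := Y '' Set.Iio (Cardinal.aleph 1).ord
  have hT : ⋂₀ T ∈ F := by
    refine hcomplete T ?_ ?_ ?_
    · rintro _ ⟨ξ, hξ, rfl⟩
      exact hYF ξ hξ
    · exact ⟨_, 0, by simp [Ordinal.omega_pos], rfl⟩
    · -- `T` and the ordinals indexing it live in different universes.
      have h := Cardinal.mk_image_le_lift (f := Y) (s := Set.Iio (Cardinal.aleph 1).ord)
      rw [Cardinal.mk_Iio_ordinal] at h
      simpa [T] using h
  obtain ⟨a, haB, haT⟩ := hB _ hT
  have ha : a ∈ Y (f a) := haT _ ⟨f a, hf a haB, rfl⟩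
  have hne : ({b ∈ B | f b = f a} ∩ Y (f a)).Nonempty := ⟨a, ⟨haB, rfl⟩, ha⟩
  exact hne.ne_empty (hY _ (hf a haB))


/-- Lemma 2.7(1): if a proper `ℵ₂`-complete filter `F` on `Z` admits a dense countably
closed `D ⊆ F⁺`, then for every `A ∈ F⁺` Player II has a winning strategy in the
Galvin game `⅁_Gal(F,A)`: a function `σ` from finite sequences of functions `A → ω₁`
to countable ordinals such that for every play `⟨Fᵢ : i < ω⟩`, with replies
`ξᵢ = σ(⟨F₀,…,Fᵢ⟩)`, the set `⋂_{i<ω} {a ∈ A : Fᵢ(a) < sup_j ξⱼ}` is `F`-positive. -/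
theorem galvin_game_strategy (Z : Type) (F : Set (Set Z))
    (huniv : Set.univ ∈ F) (hproper : ∅ ∉ F)
    (hup : ∀ Y ∈ F, ∀ Y' : Set Z, Y ⊆ Y' → Y' ∈ F)
    (hcomplete : ∀ T : Set (Set Z), T ⊆ F → T.Nonempty →
      Cardinal.mk ↥T ≤ Cardinal.aleph 1 → ⋂₀ T ∈ F)
    (D : Set (Set Z))
    (hDpos : ∀ B ∈ D, ∀ Y ∈ F, (B ∩ Y).Nonempty)
    (hDdense : ∀ A : Set Z, (∀ Y ∈ F, (A ∩ Y).Nonempty) → ∃ B ∈ D, B ⊆ A)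
    (hDclosed : ∀ g : ℕ → Set Z, (∀ n, g n ∈ D) → (∀ n, g (n + 1) ⊆ g n) →
      ∃ B ∈ D, ∀ n, B ⊆ g n) :
    ∀ A : Set Z, (∀ Y ∈ F, (A ∩ Y).Nonempty) →
      ∃ σ : List (Z → Ordinal) → Ordinal,
        (∀ l : List (Z → Ordinal), σ l < (Cardinal.aleph 1).ord) ∧
        ∀ Fseq : ℕ → Z → Ordinal,
          (∀ i : ℕ, ∀ a ∈ A, Fseq i a < (Cardinal.aleph 1).ord) →
          ∀ ξ : ℕ → Ordinal,
            (∀ i : ℕ, ξ i = σ (List.ofFn fun k : Fin (i + 1) => Fseq k.val)) →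
            ∀ Y ∈ F, ({a ∈ A | ∀ i : ℕ, Fseq i a < ⨆ j, ξ j} ∩ Y).Nonempty := by
  intro A hA
  obtain ⟨B₀, hB₀D, hB₀A⟩ := hDdense A hA
  -- One round of the game: the new set in `D` together with the reply of Player II.
  -- Illegal moves get an arbitrary legal reply, so that the strategy is total.
  have hstep : ∀ (B : {B // B ∈ D}) (f : Z → Ordinal),
      ∃ p : {B // B ∈ D} × Set.Iio (Cardinal.aleph 1).ord, p.1.1 ⊆ B.1 ∧
        ((∀ a ∈ B.1, f a < (Cardinal.aleph 1).ord) → ∀ a ∈ p.1.1, f a < p.2.1) := by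
    intro B f
    by_cases hf : ∀ a ∈ B.1, f a < (Cardinal.aleph 1).ord
    · obtain ⟨ξ, hξ, hpos⟩ := exists_positive_fibre hcomplete (hDpos B.1 B.2) f hf
      obtain ⟨C, hCD, hC⟩ := hDdense _ hpos
      have hlim : Order.IsSuccLimit (Cardinal.aleph 1).ord :=
        Cardinal.isSuccLimit_ord (Cardinal.aleph0_le_aleph 1)
      refine ⟨⟨⟨C, hCD⟩, ⟨Order.succ ξ, hlim.succ_lt hξ⟩⟩, fun a ha => (hC ha).1, ?_⟩
      intro _ a ha
      exact Order.lt_succ_iff.2 (hC ha).2.le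
    · exact ⟨⟨B, ⟨0, by simp [Ordinal.omega_pos]⟩⟩, subset_rfl, fun h => absurd h hf⟩
  choose step hsub hlt using hstep
  let run : List (Z → Ordinal) → {B // B ∈ D} × Set.Iio (Cardinal.aleph 1).ord :=
    fun l => l.foldl (fun p f => step p.1 f) (⟨B₀, hB₀D⟩, ⟨0, by simp [Ordinal.omega_pos]⟩)
  refine ⟨fun l => (run l).2.1, fun l => (run l).2.2, ?_⟩
  intro Fseq hF ξ hξ
  let s : ℕ → {B // B ∈ D} × Set.Iio (Cardinal.aleph 1).ord :=
    fun i => run (List.ofFn fun k : Fin i => Fseq k.val)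
  have hs : ∀ i, s (i + 1) = step (s i).1 (Fseq i) := by
    intro i
    simp only [s, run, List.ofFn_succ_last, List.foldl_append]
    simp
  have hdec : ∀ i, (s (i + 1)).1.1 ⊆ (s i).1.1 := by
    intro i
    rw [hs]
    exact hsub _ _
  have hsA : ∀ i, (s i).1.1 ⊆ A := by
    intro i
    induction i with
    | zero => exact hB₀A
    | succ i ih => exact (hdec i).trans ih
  have hbdd : BddAbove (Set.range ξ) := by
    refine ⟨(Cardinal.aleph 1).ord, ?_⟩
    rintro _ ⟨i, rfl⟩
    rw [hξ i]
    exact (s (i + 1)).2.2.le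
  obtain ⟨B, hBD, hB⟩ := hDclosed (fun n => (s n).1.1) (fun n => (s n).1.2) hdec
  intro Y hY
  refine (hDpos B hBD Y hY).mono (Set.inter_subset_inter_left _ ?_)
  intro a ha
  refine ⟨hsA 0 (hB 0 ha), fun i => ?_⟩
  have h1 : a ∈ (step (s i).1 (Fseq i)).1.1 := hs i ▸ hB (i + 1) ha
  have h2 := hlt (s i).1 (Fseq i) (fun b hb => hF i b (hsA i hb)) a h1
  rw [← hs i] at h2
  have h3 : Fseq i a < ξ i := by
    rw [hξ i]
    exact h2
  exact h3.trans_le (le_ciSup hbdd i)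
end
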